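/- Let G be a finite Frobenius group with Frobenius kernel K and cyclic Frobenius complement H. Then G has perfect order classes if, and only if, one of the following holds: (1) K is a nontrivial cyclic p-group for some odd prime p with p = 1 + |H|, and |H| is an even positive integer of the form 2^a·3^b; or (2) G is isomorphic to one of the semidirect products C_{3^k}^2 ⋊ C_8, C_{5^k}^2 ⋊ C_{24}, C_{7^k}^2 ⋊ C_{48}, or C_{17^k}^2 ⋊ C_{288} (each with fixed-point-free action), for some positive integer k. -/

import Mathlib

/-- The number of elements of order `n` in the group `G`. -/
noncomputable def orderCount (G : Type*) [Group G] (n : ℕ) : ℕ :=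
  Nat.card {g : G // orderOf g = n}

/-- A group has *perfect order classes* if, for every positive integer `n`, the number of
elements of order `n` is either zero or a divisor of the order of the group. -/
def PerfectOrderClasses (G : Type*) [Group G] : Prop :=
  ∀ n : ℕ, 0 < n → orderCount G n = 0 ∨ orderCount G n ∣ Nat.card G

/-- `G` is a Frobenius group with Frobenius kernel `K` and Frobenius complement `H`:
`K` is a nontrivial proper normal subgroup, `H` a subgroup with `K ⊓ H = ⊥` and `KH = G`,
and the conjugation action of `H` on `K` is fixed-point-free. -/
def IsFrobeniusWith {G : Type*} [Group G] (K H : Subgroup G) : Prop :=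
  K ≠ ⊥ ∧ K ≠ ⊤ ∧ K.Normal ∧ K ⊓ H = ⊥ ∧
    (∀ g : G, ∃ k ∈ K, ∃ h ∈ H, g = k * h) ∧
    ∀ h ∈ H, h ≠ 1 → ∀ k ∈ K, k ≠ 1 → h * k * h⁻¹ ≠ k

/-- `G` is isomorphic to the outer semidirect product `N ⋊ C` for some
fixed-point-free action of `C` on `N` (i.e. a Frobenius semidirect product). -/
def IsoFrobSdp (G : Type*) [Group G] (N C : Type*) [Group N] [Group C] : Prop :=
  ∃ φ : C →* MulAut N,
    (∀ h : C, h ≠ 1 → ∀ x : N, x ≠ 1 → φ h x ≠ x) ∧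
      Nonempty (G ≃* SemidirectProduct N C φ)

theorem three_pow_add_one_eq_two_pow {j k : ℕ} (h : 3 ^ j + 1 = 2 ^ k) : j ≤ 1 := by
  have h8 : 3 ^ j % 8 = 1 ∨ 3 ^ j % 8 = 3 := by
    clear h
    induction j with
    | zero => simp
    | succ n ih => rw [pow_succ]; omega
  have hk : k ≤ 2 := by
    by_contra hk
    have : 2 ^ 3 ∣ 2 ^ k := pow_dvd_pow 2 (by omega)
    omega
  by_contra hj
  have h1 : 3 ^ 2 ≤ 3 ^ j := Nat.pow_le_pow_right (by norm_num) (by omega)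
  have h2 : 2 ^ k ≤ 2 ^ 2 := Nat.pow_le_pow_right (by norm_num) hk
  omega

theorem two_pow_add_one_eq_three_pow {i l : ℕ} (h : 2 ^ i + 1 = 3 ^ l) : i = 1 ∨ i = 3 := by
  rcases Nat.even_or_odd' l with ⟨z, rfl | rfl⟩
  · have hz : 1 ≤ z := by
      rcases Nat.eq_zero_or_pos z with rfl | hz
      · simp at h
      · exact hz
    have h3 : 3 ^ 1 ≤ 3 ^ z := Nat.pow_le_pow_right (by norm_num) hz
    obtain ⟨y, hy⟩ : ∃ y, 3 ^ z = y + 1 := ⟨3 ^ z - 1, by omega⟩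
    have hfac : 2 ^ i = y * (y + 2) := by
      have : 3 ^ (2 * z) = (y + 1) ^ 2 := by rw [← hy, ← pow_mul, mul_comm]
      nlinarith
    obtain ⟨s, -, hs⟩ := (Nat.dvd_prime_pow Nat.prime_two).1 (Dvd.intro _ hfac.symm)
    obtain ⟨t, -, ht⟩ := (Nat.dvd_prime_pow Nat.prime_two).1 (Dvd.intro_left _ hfac.symm)
    have hs1 : s ≤ 1 := by
      by_contra hs1
      have h4 : 2 ^ 2 ∣ 2 ^ s := pow_dvd_pow 2 (by omega)
      have h5 : 2 ^ 2 ∣ 2 ^ t := pow_dvd_pow 2 (by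
        by_contra ht1
        have : 2 ^ t ≤ 2 ^ 1 := Nat.pow_le_pow_right (by norm_num) (by omega)
        omega)
      omega
    have hy2 : y = 2 := by interval_cases s <;> omega
    right
    subst hy2
    exact Nat.pow_right_injective le_rfl (by simpa using hfac)
  · left
    have h8 : 3 ^ (2 * z + 1) % 8 = 3 := by
      clear h
      induction z with
      | zero => simp
      | succ n ih => rw [show 2 * (n + 1) + 1 = (2 * n + 1) + 2 by ring, pow_add]; omega
    have hi : i ≤ 1 := by
      by_contra hi
      have : 2 ^ 2 ∣ 2 ^ i := pow_dvd_pow 2 (by omega)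
      omega
    interval_cases i <;> omega

theorem exists_eq_two_pow_mul_three_pow_of_dvd {u a b : ℕ} (h : u ∣ 2 ^ a * 3 ^ b) :
    ∃ i j, u = 2 ^ i * 3 ^ j := by
  obtain ⟨v, w, hv, hw, rfl⟩ := (Nat.dvd_mul).1 h
  obtain ⟨i, -, rfl⟩ := (Nat.dvd_prime_pow Nat.prime_two).1 hv
  obtain ⟨j, -, rfl⟩ := (Nat.dvd_prime_pow Nat.prime_three).1 hw
  exact ⟨i, j, rfl⟩

/-- The squares one above an even `3`-smooth number. -/
theorem eq_of_sq_eq_two_pow_mul_three_pow_add_one {x a b : ℕ} (ha : 0 < a)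
    (h : x ^ 2 = 2 ^ a * 3 ^ b + 1) : x = 3 ∨ x = 5 ∨ x = 7 ∨ x = 17 := by
  have hev : 2 ∣ 2 ^ a * 3 ^ b := Dvd.dvd.mul_right (dvd_pow_self 2 ha.ne') _
  have hpos : 0 < 2 ^ a * 3 ^ b := by positivity
  obtain ⟨u, rfl⟩ : Odd x := by
    rw [← Nat.not_even_iff_odd]
    intro hx
    obtain ⟨y, rfl⟩ := hx
    have : (y + y) ^ 2 = 2 * (2 * y ^ 2) := by ring
    omega
  have hfac : 2 ^ a * 3 ^ b = 4 * u * (u + 1) := by nlinarith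
  obtain ⟨i, j, hu⟩ := exists_eq_two_pow_mul_three_pow_of_dvd
    (show u ∣ 2 ^ a * 3 ^ b from ⟨4 * (u + 1), by rw [hfac]; ring⟩)
  obtain ⟨k, l, hu'⟩ := exists_eq_two_pow_mul_three_pow_of_dvd
    (show u + 1 ∣ 2 ^ a * 3 ^ b from ⟨4 * u, by rw [hfac]; ring⟩)
  have h2 : i = 0 ∨ k = 0 := by
    by_contra! hc
    have h1 : 2 ∣ u := hu ▸ Dvd.dvd.mul_right (dvd_pow_self 2 hc.1) _
    have h1' : 2 ∣ u + 1 := hu' ▸ Dvd.dvd.mul_right (dvd_pow_self 2 hc.2) _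
    omega
  have h3 : j = 0 ∨ l = 0 := by
    by_contra! hc
    have h1 : 3 ∣ u := hu ▸ Dvd.dvd.mul_left (dvd_pow_self 3 hc.1) _
    have h1' : 3 ∣ u + 1 := hu' ▸ Dvd.dvd.mul_left (dvd_pow_self 3 hc.2) _
    omega
  have caseA : i = 0 → l = 0 → 2 * u + 1 = 3 ∨ 2 * u + 1 = 7 := by
    rintro rfl rfl
    rw [pow_zero, one_mul] at hu
    rw [pow_zero, mul_one] at hu'
    have := three_pow_add_one_eq_two_pow (hu ▸ hu')
    interval_cases j <;> omega
  have caseB : k = 0 → j = 0 → 2 * u + 1 = 5 ∨ 2 * u + 1 = 17 := by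
    rintro rfl rfl
    rw [pow_zero, mul_one] at hu
    rw [pow_zero, one_mul] at hu'
    rcases two_pow_add_one_eq_three_pow (hu ▸ hu') with rfl | rfl <;> omega
  rcases h2 with h2 | h2 <;> rcases h3 with h3 | h3
  · have hu1 : u = 1 := by simp [hu, h2, h3]
    simp [hu1]
  · rcases caseA h2 h3 with h | h <;> simp [h]
  · rcases caseB h2 h3 with h | h <;> simp [h]
  · have hu1 : u + 1 = 1 := by simp [hu', h2, h3]
    have : u = 0 := by omega
    simp [this] at hfac

theorem sq_add_self_add_one_not_dvd_three_pow {y b : ℕ} (hy : 1 < y) :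
    ¬ y ^ 2 + y + 1 ∣ 3 ^ b := by
  intro h
  obtain ⟨d, -, hd⟩ := (Nat.dvd_prime_pow Nat.prime_three).1 h
  have hd1 : d ≤ 1 := by
    by_contra hd1
    have h9 : 3 ^ 2 ∣ y ^ 2 + y + 1 := hd ▸ pow_dvd_pow 3 (by omega)
    have : (y ^ 2 + y + 1) % 9 = 0 := Nat.mod_eq_zero_of_dvd h9
    rw [Nat.add_mod, Nat.add_mod (y ^ 2), Nat.pow_mod] at this
    have hlt : y % 9 < 9 := Nat.mod_lt _ (by norm_num)
    interval_cases y % 9 <;> simp at this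
  have : 3 ^ d ≤ 3 ^ 1 := Nat.pow_le_pow_right (by norm_num) hd1
  nlinarith

theorem odd_pow_ne_two_pow_mul_three_pow_add_one {p r a b : ℕ} (hp : 1 < p) (hpo : Odd p)
    (hr : Odd r) (hr1 : 1 < r) : p ^ r ≠ 2 ^ a * 3 ^ b + 1 := by
  intro h
  have odd_dvd : ∀ s : ℕ, Odd s → s ∣ 2 ^ a * 3 ^ b → s ∣ 3 ^ b := fun s hs hd =>
    Nat.Coprime.dvd_of_dvd_mul_left ((Nat.coprime_two_right.2 hs).pow_right a) hd
  set S := ∑ i ∈ Finset.range r, p ^ i with hS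
  have hmul : (p - 1) * S = 2 ^ a * 3 ^ b := by
    have := Nat.geomSum_eq hp r
    rw [← hS] at this
    rw [this, h, Nat.add_sub_cancel, Nat.mul_div_cancel']
    rw [show 2 ^ a * 3 ^ b = p ^ r - 1 ^ r by simp [h]]
    exact Nat.sub_dvd_pow_sub_pow p 1 r
  have hSodd : Odd S := by
    rw [hS, Finset.odd_sum_iff_odd_card_odd, Finset.filter_true_of_mem (fun i _ => hpo.pow)]
    simpa using hr
  have hS1 : S ≠ 1 := by
    have : ∑ i ∈ Finset.range 2, p ^ i ≤ S :=
      Finset.sum_le_sum_of_subset (Finset.range_mono hr1)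
    simp [Finset.sum_range_succ] at this
    omega
  obtain ⟨c, -, hc⟩ := (Nat.dvd_prime_pow Nat.prime_three).1
    (odd_dvd S hSodd (Dvd.intro_left _ hmul))
  have h3S : 3 ∣ S := by
    rw [hc]
    exact dvd_pow_self 3 (by rintro rfl; exact hS1 (by simpa using hc))
  have h3 : (2 ^ a * 3 ^ b) % 3 = 0 := Nat.mod_eq_zero_of_dvd (h3S.trans (Dvd.intro_left _ hmul))
  have hp3 : p ≡ 1 [MOD 3] := by
    have h1 : p ^ r % 3 = 1 := by omega
    rw [Nat.pow_mod] at h1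
    have : p % 3 < 3 := Nat.mod_lt _ (by norm_num)
    obtain ⟨t, rfl⟩ := hr
    unfold Nat.ModEq
    interval_cases p % 3
    · simp at h1
    · rfl
    · rw [pow_succ, pow_mul, Nat.mul_mod, Nat.pow_mod] at h1
      simp at h1
  have h3r : 3 ∣ r := by
    have : S ≡ ∑ i ∈ Finset.range r, 1 [MOD 3] :=
      Nat.ModEq.sum fun i _ => by simpa using hp3.pow i
    simp only [Finset.sum_const, Finset.card_range, smul_eq_mul, mul_one] at this
    exact (this.dvd_iff dvd_rfl).1 h3S
  obtain ⟨s, rfl⟩ := h3r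
  have hs : s ≠ 0 := by rintro rfl; simp at hr1
  have hy : 1 < p ^ s := Nat.one_lt_pow hs hp
  refine sq_add_self_add_one_not_dvd_three_pow (b := b) hy (odd_dvd _ ?_ ⟨p ^ s - 1, ?_⟩)
  · rw [show (p ^ s) ^ 2 + p ^ s + 1 = p ^ s * (p ^ s + 1) + 1 by ring]
    exact (Nat.even_mul_succ_self _).add_one
  · obtain ⟨y, hy'⟩ : ∃ y, p ^ s = y + 1 := ⟨p ^ s - 1, by omega⟩
    have : (y + 1) ^ 3 = 2 ^ a * 3 ^ b + 1 := by rw [← hy', ← pow_mul, mul_comm, h]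
    rw [hy', Nat.add_sub_cancel]
    nlinarith

/-- The prime powers one above an even `3`-smooth number are primes, or squares of
`3`, `5`, `7` or `17`. -/
theorem prime_pow_eq_two_pow_mul_three_pow_add_one {p r a b : ℕ} (hp : p.Prime) (ha : 0 < a)
    (h : p ^ r = 2 ^ a * 3 ^ b + 1) :
    r = 1 ∨ r = 2 ∧ (p = 3 ∨ p = 5 ∨ p = 7 ∨ p = 17) := by
  have hev : 2 ∣ 2 ^ a * 3 ^ b := Dvd.dvd.mul_right (dvd_pow_self 2 ha.ne') _
  have hpos : 0 < 2 ^ a * 3 ^ b := by positivity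
  have hr0 : r ≠ 0 := by rintro rfl; simp at h
  have hpo : Odd p := by
    have : Odd (p ^ r) := by rw [h]; exact (even_iff_two_dvd.2 hev).add_one
    exact (Nat.odd_pow_iff hr0).1 this
  rcases Nat.even_or_odd' r with ⟨s, rfl | rfl⟩
  · right
    have hx := eq_of_sq_eq_two_pow_mul_three_pow_add_one (x := p ^ s) ha
      (by rw [← h, ← pow_mul, mul_comm])
    have hpr : (p ^ s).Prime := by rcases hx with hx | hx | hx | hx <;> rw [hx] <;> norm_num
    obtain rfl : s = 1 := Nat.Prime.eq_one_of_pow hpr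
    simpa using hx
  · left
    by_contra hne
    exact odd_pow_ne_two_pow_mul_three_pow_add_one hp.one_lt hpo ⟨s, rfl⟩ (by omega) h

theorem totient_two_pow_mul_three_pow_dvd {a : ℕ} (ha : 0 < a) (b : ℕ) :
    (2 ^ a * 3 ^ b).totient ∣ 2 ^ a * 3 ^ b := by
  obtain ⟨a, rfl⟩ : ∃ a', a = a' + 1 := ⟨a - 1, by omega⟩
  rw [Nat.totient_mul (Nat.Coprime.pow _ _ (by norm_num)),
    Nat.totient_prime_pow_succ Nat.prime_two]
  cases b with
  | zero => simpa using pow_dvd_pow 2 (Nat.le_succ a)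
  | succ b =>
    rw [Nat.totient_prime_pow_succ Nat.prime_three]
    exact ⟨3, by norm_num; ring⟩

theorem exists_eq_two_pow_mul_three_pow_of_totient_dvd {m : ℕ} (hm : 1 < m)
    (h : m.totient ∣ m) : ∃ a b, 0 < a ∧ m = 2 ^ a * 3 ^ b := by
  have hd : ∀ d, d ∣ m → d.totient ∣ m := fun d hd => (Nat.totient_dvd_of_dvd hd).trans h
  obtain ⟨a, s, hs, hms⟩ := Nat.exists_eq_two_pow_mul_odd (n := m) (by omega)
  have ha : 0 < a := by
    by_contra ha
    obtain rfl : a = 0 := by omega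
    rw [pow_zero, one_mul] at hms
    subst hms
    have : Even m.totient := Nat.totient_even (by obtain ⟨t, rfl⟩ := hs; omega)
    exact (Nat.not_even_iff_odd.2 hs) (this.trans_dvd h)
  have hnot : ¬ 2 ^ (a + 1) ∣ m := by
    rw [hms, pow_succ, Nat.mul_dvd_mul_iff_left (by positivity)]
    exact fun h2 => (Nat.not_even_iff_odd.2 hs) (even_iff_two_dvd.2 h2)
  have htot : ∀ t, t ∣ s → 2 ^ (a - 1) * t.totient ∣ m := by
    intro t ht
    have hto : Odd t := hs.of_dvd_nat ht
    have := hd (2 ^ a * t) (hms ▸ Nat.mul_dvd_mul_left _ ht)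
    rwa [Nat.totient_mul ((Nat.coprime_two_left.2 hto).pow_left a),
      Nat.totient_prime_pow Nat.prime_two ha, show 2 - 1 = 1 from rfl, mul_one] at this
  have h4 : ∀ t, t ∣ s → ¬ 4 ∣ t.totient := by
    intro t ht h4
    apply hnot
    refine dvd_trans ?_ (htot t ht)
    rw [show a + 1 = (a - 1) + 2 by omega, pow_add]
    exact Nat.mul_dvd_mul_left _ h4
  have hq : ∀ q, q.Prime → q ∣ s → Even (q - 1) := fun q hq hqs =>
    Nat.Odd.sub_odd (hs.of_dvd_nat hqs) odd_one
  by_cases hs1 : s = 1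
  · exact ⟨a, 0, ha, by simp [hms, hs1]⟩
  set q := s.minFac with hqdef
  have hqp : q.Prime := Nat.minFac_prime hs1
  have hqs : q ∣ s := Nat.minFac_dvd s
  obtain ⟨b, hb⟩ : ∃ b, s = q ^ b := by
    refine ⟨_, Nat.eq_prime_pow_of_unique_prime_dvd (by rintro rfl; simp at hs) ?_⟩
    intro d hdp hds
    by_contra hne
    have hcop : d.Coprime q := (Nat.coprime_primes hdp hqp).2 hne
    apply h4 (d * q) (hcop.mul_dvd_of_dvd_of_dvd hds hqs)
    rw [Nat.totient_mul hcop, Nat.totient_prime hdp, Nat.totient_prime hqp]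
    exact mul_dvd_mul (even_iff_two_dvd.1 (hq d hdp hds)) (even_iff_two_dvd.1 (hq q hqp hqs))
  have hq1 : q - 1 ∣ 2 ^ a := by
    have h1 : q - 1 ∣ m := by
      rw [← Nat.totient_prime hqp]
      exact hd q (hqs.trans (hms ▸ Dvd.intro_left _ rfl))
    rw [hms, hb] at h1
    refine Nat.Coprime.dvd_of_dvd_mul_right (Nat.Coprime.pow_right b ?_) h1
    exact (Nat.coprime_self_sub_left hqp.one_lt.le).2 (Nat.coprime_one_left _)
  obtain ⟨c, -, hc⟩ := (Nat.dvd_prime_pow Nat.prime_two).1 hq1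
  have hc1 : c ≤ 1 := by
    by_contra hc1
    apply h4 q hqs
    rw [Nat.totient_prime hqp, hc]
    exact pow_dvd_pow 2 (show 2 ≤ c by omega)
  have hq3 : q = 3 := by
    have := hqp.two_le
    have h2 := hq q hqp hqs
    obtain ⟨w, hw⟩ := h2
    interval_cases c <;> omega
  exact ⟨a, b, ha, by rw [hms, hb, hq3]⟩

theorem orderCount_congr {A B : Type*} [Group A] [Group B] (e : A ≃* B) (n : ℕ) :
    orderCount A n = orderCount B n :=
  Nat.card_congr (e.toEquiv.subtypeEquiv fun a => by simp [MulEquiv.orderOf_eq])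

theorem PerfectOrderClasses.of_mulEquiv {A B : Type*} [Group A] [Group B] (e : A ≃* B)
    (h : PerfectOrderClasses B) : PerfectOrderClasses A := fun n hn => by
  rw [orderCount_congr e, Nat.card_congr e.toEquiv]
  exact h n hn

theorem orderCount_one (A : Type*) [Group A] : orderCount A 1 = 1 := by
  simp [orderCount, orderOf_eq_one_iff]

theorem orderCount_ne_zero_iff {A : Type*} [Group A] [Finite A] {n : ℕ} :
    orderCount A n ≠ 0 ↔ ∃ a : A, orderOf a = n := by
  rw [orderCount, Nat.card_ne_zero, nonempty_subtype]
  exact and_iff_left inferInstance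

theorem orderCount_eq_totient {A : Type*} [Group A] [Finite A] [IsCyclic A] {d : ℕ}
    (hd : d ∣ Nat.card A) : orderCount A d = d.totient := by
  classical
  have := Fintype.ofFinite A
  rw [Nat.card_eq_fintype_card] at hd
  rw [← IsCyclic.card_orderOf_eq_totient hd, orderCount, Nat.card_eq_fintype_card,
    Fintype.card_subtype]

theorem orderCount_mul_of_coprime {A : Type*} [CommGroup A] {a b : ℕ} (ha : 0 < a) (hb : 0 < b)
    (hab : a.Coprime b) : orderCount A (a * b) = orderCount A a * orderCount A b := by
  rw [orderCount, orderCount, orderCount, ← Nat.card_prod]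
  symm
  refine Nat.card_congr (Equiv.ofBijective (fun z => ⟨z.1.1 * z.2.1, ?_⟩) ⟨?_, ?_⟩)
  · obtain ⟨⟨x, rfl⟩, ⟨y, rfl⟩⟩ := z
    exact (Commute.all x y).orderOf_mul_eq_mul_orderOf_of_coprime hab
  · rintro ⟨⟨x, hx⟩, ⟨y, hy⟩⟩ ⟨⟨x', hx'⟩, ⟨y', hy'⟩⟩ h
    have h : x * y = x' * y' := congrArg Subtype.val h
    have h1 : x'⁻¹ * x = y' * y⁻¹ := by
      rw [inv_mul_eq_iff_eq_mul, ← mul_assoc, ← h, mul_inv_cancel_right]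
    have hxa : (x'⁻¹ * x) ^ a = 1 := by
      rw [mul_pow, inv_pow, ← hx, pow_orderOf_eq_one, hx, ← hx', pow_orderOf_eq_one]; simp
    have hyb : (x'⁻¹ * x) ^ b = 1 := by
      rw [h1, mul_pow, inv_pow, ← hy, pow_orderOf_eq_one, hy, ← hy', pow_orderOf_eq_one]; simp
    have h2 : x'⁻¹ * x = 1 := by
      rw [← orderOf_eq_one_iff, ← Nat.dvd_one, ← hab]
      exact Nat.dvd_gcd (orderOf_dvd_of_pow_eq_one hxa) (orderOf_dvd_of_pow_eq_one hyb)
    have h3 : x = x' := (inv_mul_eq_one.1 h2).symm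
    subst h3
    have h4 : y = y' := mul_left_cancel h
    subst h4
    rfl
  · rintro ⟨z, hz⟩
    obtain ⟨v, u, huv⟩ := Nat.isCoprime_iff_coprime.2 hab
    have hx : (z ^ ((b : ℤ) * u)) ^ a = 1 := by
      rw [← zpow_natCast, ← zpow_mul,
        show (b : ℤ) * u * a = ((a * b : ℕ) : ℤ) * u by push_cast; ring, zpow_mul,
        zpow_natCast, ← hz, pow_orderOf_eq_one, one_zpow]
    have hy : (z ^ ((a : ℤ) * v)) ^ b = 1 := by
      rw [← zpow_natCast, ← zpow_mul,
        show (a : ℤ) * v * b = ((a * b : ℕ) : ℤ) * v by push_cast; ring, zpow_mul,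
        zpow_natCast, ← hz, pow_orderOf_eq_one, one_zpow]
    have hxy : z ^ ((b : ℤ) * u) * z ^ ((a : ℤ) * v) = z := by
      rw [← zpow_add, show (b : ℤ) * u + a * v = 1 by linarith, zpow_one]
    have hox := orderOf_dvd_of_pow_eq_one hx
    have hoy := orderOf_dvd_of_pow_eq_one hy
    have hmul := Commute.orderOf_mul_eq_mul_orderOf_of_coprime
      (Commute.all (z ^ ((b : ℤ) * u)) (z ^ ((a : ℤ) * v))) (Nat.Coprime.of_dvd hox hoy hab)
    rw [hxy, hz] at hmul
    have h1 := Nat.le_of_dvd ha hox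
    have h2 := Nat.le_of_dvd hb hoy
    refine ⟨⟨⟨_, le_antisymm h1 ?_⟩, ⟨_, le_antisymm h2 ?_⟩⟩, Subtype.ext hxy⟩
    · by_contra! hlt
      exact absurd hmul (Nat.mul_lt_mul_of_lt_of_le hlt h2 hb).ne'
    · by_contra! hlt
      exact absurd hmul (Nat.mul_lt_mul_of_le_of_lt h1 hlt ha).ne'

theorem ncard_pow_eq_one {A : Type*} [Group A] {ι : Type*} [Fintype ι] {n : ι → ℕ}
    (hn : ∀ i, n i ≠ 0) (f : A ≃* ((i : ι) → Multiplicative (ZMod (n i)))) (d : ℕ) :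
    {x : A | x ^ d = 1}.ncard = ∏ i, (n i).gcd d := by
  have : ∀ i, NeZero (n i) := fun i => ⟨hn i⟩
  have key : {x : A // x ^ d = 1} ≃
      ((i : ι) → (powMonoidHom d : Multiplicative (ZMod (n i)) →* _).ker) :=
    (f.toEquiv.subtypeEquiv (q := fun z => ∀ i, z i ∈ (powMonoidHom d).ker) fun a => by
      simp only [MonoidHom.mem_ker, powMonoidHom_apply, ← map_eq_one_iff f f.injective, map_pow,
        funext_iff, MulEquiv.toEquiv_eq_coe, EquivLike.coe_coe, Pi.pow_apply,
        Pi.one_apply]).trans Equiv.subtypePiEquivPi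
  rw [← Nat.card_coe_set_eq]
  refine (Nat.card_congr key).trans ?_
  rw [Nat.card_pi]
  refine Finset.prod_congr rfl fun i _ => ?_
  rw [IsCyclic.card_powMonoidHom_ker]
  simp

theorem orderCount_prime_pow_succ {A : Type*} [Group A] [Finite A] {p : ℕ} (hp : p.Prime) (j : ℕ) :
    orderCount A (p ^ (j + 1)) + {x : A | x ^ p ^ j = 1}.ncard =
      {x : A | x ^ p ^ (j + 1) = 1}.ncard := by
  have : Fact p.Prime := ⟨hp⟩
  have hsub : {x : A | x ^ p ^ j = 1} ⊆ {x : A | x ^ p ^ (j + 1) = 1} := fun x hx => by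
    simp only [Set.mem_ofPred_eq] at hx ⊢
    rw [pow_succ, pow_mul, hx, one_pow]
  have heq : {x : A | orderOf x = p ^ (j + 1)} =
      {x : A | x ^ p ^ (j + 1) = 1} \ {x : A | x ^ p ^ j = 1} := by
    ext x
    constructor
    · intro (hx : orderOf x = p ^ (j + 1))
      refine ⟨?_, fun h => ?_⟩
      · rw [Set.mem_ofPred_eq, ← hx, pow_orderOf_eq_one]
      · have := Nat.le_of_dvd (pow_pos hp.pos _) (orderOf_dvd_of_pow_eq_one h)
        rw [hx] at this
        exact absurd this (Nat.pow_lt_pow_right hp.one_lt (Nat.lt_succ_self j)).not_ge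
    · rintro ⟨h1, h2⟩
      exact orderOf_eq_prime_pow h2 h1
  rw [← Set.ncard_sdiff_add_ncard_of_subset hsub, ← heq, ← Nat.card_coe_set_eq]
  rfl

/-- If the automorphisms of a product of cyclic `p`-groups are transitive on the elements of
order `p`, then all the factors have the same order. -/
theorem exponent_le_of_transitive {A : Type*} [Group A] {ι : Type*} {p : ℕ} (hp : p.Prime)
    {e : ι → ℕ} (he : ∀ i, 0 < e i) (f : A ≃* ((i : ι) → Multiplicative (ZMod (p ^ e i))))
    (ht : ∀ x y : A, orderOf x = p → orderOf y = p → ∃ σ : MulAut A, σ x = y) (i j : ι) :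
    e i ≤ e j := by
  classical
  have : Fact p.Prime := ⟨hp⟩
  set g : (i : ι) → Multiplicative (ZMod (p ^ e i)) := fun i => Multiplicative.ofAdd 1 with hg
  have hgo : ∀ i, orderOf (g i) = p ^ e i := fun i => by
    rw [hg, orderOf_ofAdd_eq_addOrderOf, ZMod.addOrderOf_one]
  have hgp : ∀ i, orderOf (g i ^ p ^ (e i - 1)) = p := fun i => by
    rw [orderOf_pow_of_dvd (pow_ne_zero _ hp.ne_zero) (by rw [hgo]; exact pow_dvd_pow p (by omega)),
      hgo, Nat.pow_div (by omega) hp.pos, show e i - (e i - 1) = 1 by have := he i; omega, pow_one]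
  have hy : ∀ i, orderOf (f.symm (Pi.mulSingle i (g i ^ p ^ (e i - 1)))) = p := fun i => by
    rw [MulEquiv.orderOf_eq, orderOf_piMulSingle, hgp]
  obtain ⟨σ, hσ⟩ := ht _ _ (hy i) (hy j)
  by_contra! hlt
  have h1 : f (f.symm (Pi.mulSingle j (g j ^ p ^ (e j - 1)))) j = 1 := by
    rw [← hσ, Pi.mulSingle_pow, map_pow, map_pow, map_pow, Pi.pow_apply,
      ← orderOf_dvd_iff_pow_eq_one]
    refine (orderOf_dvd_natCard _).trans ?_
    simpa using pow_dvd_pow p (show e j ≤ e i - 1 by omega)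
  rw [MulEquiv.apply_symm_apply, Pi.mulSingle_eq_same] at h1
  have h2 := hgp j
  rw [h1, orderOf_one] at h2
  exact hp.one_lt.ne h2

namespace IsFrobeniusWith

variable {G : Type*} [Group G] {K H : Subgroup G}

theorem isComplement' (hF : IsFrobeniusWith K H) : K.IsComplement' H := by
  obtain ⟨-, -, -, hinf, hmul, -⟩ := hF
  refine Subgroup.isComplement'_of_disjoint_and_mul_eq_univ (disjoint_iff.2 hinf) ?_
  refine Set.eq_univ_of_forall fun g => ?_
  obtain ⟨k, hk, h, hh, rfl⟩ := hmul g
  exact Set.mul_mem_mul hk hh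

theorem card_eq (hF : IsFrobeniusWith K H) : Nat.card G = Nat.card K * Nat.card H :=
  hF.isComplement'.card_mul_card.symm

theorem one_lt_card_complement [Finite G] (hF : IsFrobeniusWith K H) : 1 < Nat.card H := by
  by_contra! h
  have h1 : Nat.card H = 1 := le_antisymm h Nat.card_pos
  refine hF.2.1 (Subgroup.eq_top_of_card_eq K ?_)
  rw [hF.card_eq, h1, mul_one]

theorem one_lt_card_kernel [Finite G] (hF : IsFrobeniusWith K H) : 1 < Nat.card K :=
  (Subgroup.one_lt_card_iff_ne_bot K).2 hF.1

theorem fixedPointFree [K.Normal] (hF : IsFrobeniusWith K H) {h : G} (hh : h ∈ H) (h1 : h ≠ 1) :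
    MonoidHom.FixedPointFree (MulAut.conjNormal h : MulAut K) := by
  intro k hk
  by_contra hk1
  refine hF.2.2.2.2.2 h hh h1 k k.2 (fun hc => hk1 (Subtype.ext hc)) ?_
  simpa using congrArg Subtype.val hk

theorem exists_conj [Finite G] (hF : IsFrobeniusWith K H) {g : G} (hg : g ∉ K) :
    ∃ k ∈ K, ∃ h ∈ H, h ≠ 1 ∧ k * h * k⁻¹ = g := by
  have := hF.2.2.1
  obtain ⟨k, hk, h, hh, rfl⟩ := hF.2.2.2.2.1 g
  have h1 : h ≠ 1 := by rintro rfl; simp [hk] at hg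
  obtain ⟨x, hx⟩ := (hF.fixedPointFree hh h1).commutatorMap_surjective ⟨k, hk⟩
  refine ⟨x, x.2, h, hh, h1, ?_⟩
  have hx := congrArg Subtype.val hx
  simp only [MonoidHom.commutatorMap_apply, Subgroup.coe_div, MulAut.conjNormal_apply] at hx
  rw [← hx, div_eq_mul_inv]
  group

theorem conj_injective (hF : IsFrobeniusWith K H) {k k' h h' : G} (hk : k ∈ K) (hk' : k' ∈ K)
    (hh : h ∈ H) (hh' : h' ∈ H) (h1 : h ≠ 1) (heq : k * h * k⁻¹ = k' * h' * k'⁻¹) :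
    k = k' ∧ h = h' := by
  have hN := hF.2.2.1
  obtain ⟨c, rfl⟩ : ∃ c, k = k' * c := ⟨k'⁻¹ * k, by group⟩
  have hc : c ∈ K := by simpa using K.mul_mem (K.inv_mem hk') hk
  have hch : c * h * c⁻¹ = h' := by
    have := congrArg (fun x => k'⁻¹ * x * k') heq
    simpa [mul_assoc] using this
  have hmem : h' * h⁻¹ ∈ K ⊓ H := by
    refine ⟨?_, H.mul_mem hh' (H.inv_mem hh)⟩
    rw [← hch, show c * h * c⁻¹ * h⁻¹ = c * (h * c⁻¹ * h⁻¹) by group]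
    exact K.mul_mem hc (hN.conj_mem _ (K.inv_mem hc) h)
  rw [hF.2.2.2.1, Subgroup.mem_bot, mul_inv_eq_one] at hmem
  subst hmem
  have hc1 : c = 1 := by
    by_contra hc1
    refine hF.2.2.2.2.2 h' hh h1 c hc hc1 ?_
    rw [mul_inv_eq_iff_eq_mul, ← mul_inv_eq_iff_eq_mul.1 hch]
  simp [hc1]

theorem card_dvd_ncard [Finite G] (hF : IsFrobeniusWith K H) {S : Set G} (hS : S ⊆ K)
    (h1 : 1 ∉ S) (hconj : ∀ h ∈ H, ∀ s ∈ S, h * s * h⁻¹ ∈ S) : Nat.card H ∣ S.ncard := by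
  let act : MulAction H S :=
    { smul := fun h s => ⟨h * s * (h : G)⁻¹, hconj h h.2 s s.2⟩
      one_smul := fun s => Subtype.ext (show (1 : G) * s * (1 : G)⁻¹ = s by simp)
      mul_smul := fun a b s => Subtype.ext
        (show (a * b : G) * s * (a * b : G)⁻¹ = a * (b * s * (b : G)⁻¹) * (a : G)⁻¹ by group) }
  have hfree : ∀ s : S, MulAction.stabilizer H s = ⊥ := by
    intro s
    refine (Subgroup.eq_bot_iff_forall _).2 fun h hh => ?_
    by_contra hne
    refine hF.2.2.2.2.2 h h.2 (fun hc => hne (Subtype.ext hc)) s (hS s.2)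
      (fun hc => h1 (hc ▸ s.2)) ?_
    exact congrArg Subtype.val (MulAction.mem_stabilizer_iff.1 hh)
  rw [← Nat.card_coe_set_eq, Nat.card_congr (MulAction.selfEquivOrbitsQuotientProd hfree),
    Nat.card_prod]
  exact Dvd.intro_left _ rfl

theorem coprime_card [Finite G] (hF : IsFrobeniusWith K H) :
    (Nat.card K).Coprime (Nat.card H) := by
  have hd : Nat.card H ∣ ((K : Set G) \ {1}).ncard := by
    refine hF.card_dvd_ncard Set.sdiff_subset (by simp) ?_
    rintro h hh s ⟨hs, hs1⟩
    refine ⟨hF.2.2.1.conj_mem s hs h, ?_⟩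
    simpa using hs1
  rw [Set.ncard_sdiff_singleton_of_mem K.one_mem, ← Nat.card_coe_set_eq] at hd
  change Nat.card H ∣ Nat.card K - 1 at hd
  have hpos : 0 < Nat.card K := Nat.card_pos
  refine Nat.Coprime.of_dvd_right hd ?_
  exact (Nat.coprime_self_sub_right hpos).2 (Nat.coprime_one_right _)

theorem orderOf_dvd_of_notMem [Finite G] (hF : IsFrobeniusWith K H) {g : G} (hg : g ∉ K) :
    orderOf g ∣ Nat.card H := by
  obtain ⟨k, -, h, hh, -, rfl⟩ := hF.exists_conj hg
  rw [← MulAut.conj_apply, MulEquiv.orderOf_eq]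
  exact Subgroup.orderOf_dvd_natCard H hh

theorem orderCount_eq_kernel [Finite G] (hF : IsFrobeniusWith K H) {n : ℕ} (hn1 : n ≠ 1)
    (hn : n ∣ Nat.card K) : orderCount G n = orderCount K n := by
  have hmem : ∀ g : G, orderOf g = n → g ∈ K := by
    intro g hg
    by_contra hgK
    exact hn1 (Nat.eq_one_of_dvd_coprimes hF.coprime_card hn (hg ▸ hF.orderOf_dvd_of_notMem hgK))
  refine Nat.card_congr ⟨fun g => ⟨⟨g.1, hmem g.1 g.2⟩, ?_⟩, fun k => ⟨k.1.1, ?_⟩, ?_, ?_⟩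
  · rw [Subgroup.orderOf_mk]; exact g.2
  · rw [Subgroup.orderOf_coe]; exact k.2
  · intro g; rfl
  · intro k; rfl

theorem orderCount_eq_complement [Finite G] (hF : IsFrobeniusWith K H) {n : ℕ} (hn1 : n ≠ 1)
    (hn : n ∣ Nat.card H) : orderCount G n = Nat.card K * orderCount H n := by
  rw [orderCount, orderCount, ← Nat.card_prod]
  symm
  refine Nat.card_congr (Equiv.ofBijective
    (fun z => ⟨z.1 * z.2.1 * (z.1 : G)⁻¹, ?_⟩) ⟨?_, ?_⟩)
  · rw [← MulAut.conj_apply, MulEquiv.orderOf_eq, Subgroup.orderOf_coe]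
    exact z.2.2
  · rintro ⟨k, ⟨h, hh⟩⟩ ⟨k', ⟨h', hh'⟩⟩ heq
    have hne : (h : G) ≠ 1 := by
      intro hc
      apply hn1
      rw [← hh, ← Subgroup.orderOf_coe, hc, orderOf_one]
    obtain ⟨h1, h2⟩ := hF.conj_injective k.2 k'.2 h.2 h'.2 hne (congrArg Subtype.val heq)
    obtain rfl := Subtype.ext h1
    obtain rfl := Subtype.ext h2
    rfl
  · rintro ⟨g, hg⟩
    have hgK : g ∉ K := fun hgK => hn1 (Nat.eq_one_of_dvd_coprimes hF.coprime_card
      (hg ▸ Subgroup.orderOf_dvd_natCard K hgK) hn)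
    obtain ⟨k, hk, h, hh, -, hkh⟩ := hF.exists_conj hgK
    refine ⟨⟨⟨k, hk⟩, ⟨⟨h, hh⟩, ?_⟩⟩, Subtype.ext hkh⟩
    rw [Subgroup.orderOf_mk, ← hg, ← hkh, ← MulAut.conj_apply, MulEquiv.orderOf_eq]

theorem card_dvd_orderCount_kernel [Finite G] (hF : IsFrobeniusWith K H) {n : ℕ} (hn1 : n ≠ 1)
    (hn : n ∣ Nat.card K) : Nat.card H ∣ orderCount K n := by
  rw [← hF.orderCount_eq_kernel hn1 hn]
  refine hF.card_dvd_ncard (S := {g | orderOf g = n}) ?_ ?_ ?_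
  · intro g (hg : orderOf g = n)
    by_contra hgK
    exact hn1 (Nat.eq_one_of_dvd_coprimes hF.coprime_card hn
      (hg ▸ hF.orderOf_dvd_of_notMem hgK))
  · simpa using hn1.symm
  · intro h _ s hs
    rw [Set.mem_ofPred_eq, ← MulAut.conj_apply, MulEquiv.orderOf_eq]
    exact hs

theorem transitive_of_orderCount_eq [Finite G] [K.Normal] (hF : IsFrobeniusWith K H) {n : ℕ}
    (hn1 : n ≠ 1) (hn : orderCount K n = Nat.card H) (x y : K) (hx : orderOf x = n)
    (hy : orderOf y = n) : ∃ σ : MulAut K, σ x = y := by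
  let F : H → {z : K // orderOf z = n} := fun h =>
    ⟨MulAut.conjNormal (h : G) x, by rw [MulEquiv.orderOf_eq, hx]⟩
  have hF1 : Function.Injective F := by
    intro a b hab
    by_contra hne
    have h1 : (MulAut.conjNormal (a : G) : MulAut K) x = MulAut.conjNormal (b : G) x :=
      congrArg Subtype.val hab
    have h2 : (b⁻¹ * a : G) ≠ 1 := fun hc => hne (Subtype.ext (inv_mul_eq_one.1 hc).symm)
    have h3 := hF.fixedPointFree (H.mul_mem (H.inv_mem b.2) a.2) h2 x (by
      rw [map_mul, MulAut.mul_apply, h1, ← MulAut.mul_apply, ← map_mul, inv_mul_cancel, map_one,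
        MulAut.one_apply])
    exact hn1 (by rw [← hx, h3, orderOf_one])
  obtain ⟨h, hh⟩ := (hF1.bijective_of_nat_card_le (by rw [← hn]; rfl)).2 ⟨y, hy⟩
  exact ⟨_, congrArg Subtype.val hh⟩

theorem mul_comm_kernel [Finite G] (hF : IsFrobeniusWith K H) (heven : Even (Nat.card H))
    (x y : K) : x * y = y * x := by
  have := hF.2.2.1
  have : Fact (Nat.Prime 2) := ⟨Nat.prime_two⟩
  obtain ⟨t, ht⟩ := exists_prime_orderOf_dvd_card' (G := H) 2 (even_iff_two_dvd.1 heven)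
  have ht1 : (t : G) ≠ 1 := by
    intro hc
    rw [← Subgroup.orderOf_coe, hc, orderOf_one] at ht
    omega
  refine (hF.fixedPointFree t.2 ht1).commute_all_of_involutive (fun k => ?_) x y
  have htt : (t : G) * t = 1 := by
    rw [← Subgroup.orderOf_coe] at ht
    rw [← sq, ← ht, pow_orderOf_eq_one]
  rw [← MulAut.mul_apply, ← map_mul, htt, map_one, MulAut.one_apply]

theorem isoFrobSdp (hF : IsFrobeniusWith K H) {N C : Type*} [Group N] [Group C] (eK : K ≃* N)
    (eH : H ≃* C) : IsoFrobSdp G N C := by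
  have := hF.2.2.1
  refine ⟨_, ?_, ⟨(SemidirectProduct.mulEquivSubgroup hF.isComplement').symm.trans
    (SemidirectProduct.congr' eK eH)⟩⟩
  intro h hh x hx hfix
  have h1 : ((eH.symm h : H) : G) ≠ 1 := by
    intro hc
    exact hh ((MulEquiv.map_eq_one_iff eH.symm).1 (Subtype.ext hc))
  have h2 : ((eK.symm x : K) : G) ≠ 1 := by
    intro hc
    exact hx ((MulEquiv.map_eq_one_iff eK.symm).1 (Subtype.ext hc))
  refine hF.2.2.2.2.2 _ (eH.symm h).2 h1 _ (eK.symm x).2 h2 ?_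
  have := congrArg (fun z => ((eK.symm z : K) : G)) hfix
  simpa using this

theorem of_semidirectProduct {N C : Type*} [Group N] [Group C] [Nontrivial N] [Nontrivial C]
    (φ : C →* MulAut N) (hφ : ∀ h : C, h ≠ 1 → ∀ x : N, x ≠ 1 → φ h x ≠ x) :
    IsFrobeniusWith (SemidirectProduct.inl : N →* SemidirectProduct N C φ).range
      (SemidirectProduct.inr : C →* SemidirectProduct N C φ).range := by
  refine ⟨?_, ?_, ?_, ?_, ?_, ?_⟩
  · obtain ⟨x, hx⟩ := exists_ne (1 : N)
    intro hc
    have : SemidirectProduct.inl (φ := φ) x ∈ (⊥ : Subgroup _) := hc ▸ ⟨x, rfl⟩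
    rw [Subgroup.mem_bot] at this
    exact hx (SemidirectProduct.inl_injective (by simpa using this))
  · obtain ⟨h, hh⟩ := exists_ne (1 : C)
    intro hc
    have : SemidirectProduct.inr (φ := φ) h ∈ SemidirectProduct.inl.range := by
      rw [hc]; trivial
    obtain ⟨x, hx⟩ := this
    exact hh (by simpa using (congrArg SemidirectProduct.right hx).symm)
  · rw [SemidirectProduct.range_inl_eq_ker_rightHom]
    infer_instance
  · refine (Subgroup.eq_bot_iff_forall _).2 ?_
    rintro g ⟨⟨x, rfl⟩, ⟨h, hh⟩⟩
    have := congrArg SemidirectProduct.left hh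
    simp only [SemidirectProduct.left_inr, SemidirectProduct.left_inl] at this
    rw [← this, map_one]
  · exact fun g => ⟨_, ⟨g.left, rfl⟩, _, ⟨g.right, rfl⟩,
      (SemidirectProduct.inl_left_mul_inr_right g).symm⟩
  · rintro _ ⟨h, rfl⟩ hne _ ⟨x, rfl⟩ hxne hc
    rw [← map_inv, ← SemidirectProduct.inl_aut] at hc
    exact hφ h (by rintro rfl; simp at hne) x (by rintro rfl; simp at hxne)
      (SemidirectProduct.inl_injective hc)

end IsFrobeniusWith

namespace IsFrobeniusWith

variable {G : Type*} [Group G] [Finite G] {K H : Subgroup G}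

theorem perfectOrderClasses_of_homocyclic (hF : IsFrobeniusWith K H) (hcyc : IsCyclic H)
    {p k a b : ℕ} (hp : p.Prime) (ha : 0 < a) {ι : Type*} [Fintype ι]
    (f : K ≃* (ι → Multiplicative (ZMod (p ^ k)))) (hH : Nat.card H = 2 ^ a * 3 ^ b)
    (hpH : p ^ Fintype.card ι = Nat.card H + 1) : PerfectOrderClasses G := by
  have : NeZero (p ^ k) := ⟨pow_ne_zero _ hp.ne_zero⟩
  have hK : Nat.card K = (p ^ k) ^ Fintype.card ι := by
    rw [Nat.card_congr f.toEquiv, Nat.card_fun]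
    simp
  intro n _
  refine or_iff_not_imp_left.2 fun hn => ?_
  obtain ⟨g, hg⟩ := orderCount_ne_zero_iff.1 hn
  by_cases hn1 : n = 1
  · simp [hn1, orderCount_one]
  by_cases hgK : g ∈ K
  · have hnpk : n ∣ p ^ k := by
      rw [← hg, ← Subgroup.orderOf_mk g hgK, ← MulEquiv.orderOf_eq f, orderOf_dvd_iff_pow_eq_one]
      funext i
      rw [Pi.pow_apply, Pi.one_apply, ← orderOf_dvd_iff_pow_eq_one]
      exact (orderOf_dvd_natCard _).trans (by simp)
    obtain ⟨j, hjk, rfl⟩ := (Nat.dvd_prime_pow hp).1 hnpk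
    obtain ⟨j, rfl⟩ : ∃ i, j = i + 1 := ⟨j - 1, by
      have : j ≠ 0 := by rintro rfl; simp at hn1
      omega⟩
    rw [hF.orderCount_eq_kernel hn1 (hg ▸ Subgroup.orderOf_dvd_natCard K hgK)]
    have hcount := orderCount_prime_pow_succ (A := K) hp j
    rw [ncard_pow_eq_one (fun _ => this.out) f, ncard_pow_eq_one (fun _ => this.out) f] at hcount
    simp only [Finset.prod_const, Finset.card_univ] at hcount
    rw [Nat.gcd_eq_right (pow_dvd_pow p hjk), Nat.gcd_eq_right (pow_dvd_pow p (by omega)),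
      show (p ^ (j + 1)) ^ Fintype.card ι = (p ^ j) ^ Fintype.card ι * p ^ Fintype.card ι by
        rw [pow_succ, mul_pow], hpH, mul_add, mul_one] at hcount
    rw [Nat.add_right_cancel hcount, hF.card_eq, hK]
    exact Nat.mul_dvd_mul_right (pow_dvd_pow_of_dvd (pow_dvd_pow p (by omega)) _) _
  · have hnH : n ∣ Nat.card H := hg ▸ hF.orderOf_dvd_of_notMem hgK
    rw [hF.orderCount_eq_complement hn1 hnH, orderCount_eq_totient hnH, hF.card_eq]
    refine Nat.mul_dvd_mul_left _ ((Nat.totient_dvd_of_dvd hnH).trans ?_)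
    rw [hH]
    exact totient_two_pow_mul_three_pow_dvd ha b

theorem totient_card_complement_dvd (hF : IsFrobeniusWith K H) (hcyc : IsCyclic H)
    (hG : PerfectOrderClasses G) : (Nat.card H).totient ∣ Nat.card H := by
  have hK : 0 < Nat.card K := Nat.card_pos
  have hH : 0 < Nat.card H := Nat.card_pos
  have h := hG _ hH
  rw [hF.orderCount_eq_complement hF.one_lt_card_complement.ne' dvd_rfl,
    orderCount_eq_totient dvd_rfl, hF.card_eq, Nat.mul_dvd_mul_iff_left hK] at h
  refine h.resolve_left (Nat.mul_pos hK (Nat.totient_pos.2 hH)).ne'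

theorem orderCount_kernel_dvd (hF : IsFrobeniusWith K H) (hG : PerfectOrderClasses G) {n : ℕ}
    (hn1 : n ≠ 1) (hnK : n ∣ Nat.card K) (hne : orderCount K n ≠ 0) :
    orderCount K n ∣ Nat.card K * Nat.card H := by
  rw [← hF.orderCount_eq_kernel hn1 hnK] at hne ⊢
  rw [← hF.card_eq]
  exact (hG n (Nat.pos_of_dvd_of_pos hnK Nat.card_pos)).resolve_left hne

theorem orderCount_kernel_prime_ne_zero {p : ℕ} (hp : p.Prime) (hpK : p ∣ Nat.card K) :
    orderCount K p ≠ 0 := by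
  have : Fact p.Prime := ⟨hp⟩
  exact orderCount_ne_zero_iff.2 (exists_prime_orderOf_dvd_card' p hpK)

theorem exists_card_kernel_eq_prime_pow (hF : IsFrobeniusWith K H)
    (hcomm : ∀ x y : K, x * y = y * x) (hG : PerfectOrderClasses G) :
    ∃ p n, p.Prime ∧ Nat.card K = p ^ n := by
  have hKpos : 0 < Nat.card K := Nat.card_pos
  set p := (Nat.card K).minFac with hpdef
  have hp : p.Prime := Nat.minFac_prime hF.one_lt_card_kernel.ne'
  have hpK : p ∣ Nat.card K := Nat.minFac_dvd _
  refine ⟨p, _, hp, Nat.eq_prime_pow_of_unique_prime_dvd hKpos.ne' ?_⟩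
  intro q hq hqK
  by_contra hne
  have hcop : q.Coprime p := (Nat.coprime_primes hq hp).2 hne
  have hqpK := hcop.mul_dvd_of_dvd_of_dvd hqK hpK
  have hqp1 : q * p ≠ 1 := by
    intro hc
    exact hq.one_lt.ne' (Nat.eq_one_of_mul_eq_one_right hc)
  have hmul : orderCount K (q * p) = orderCount K q * orderCount K p :=
    letI : CommGroup K := { (inferInstance : Group K) with mul_comm := hcomm }
    orderCount_mul_of_coprime hq.pos hp.pos hcop
  have h0 : orderCount K (q * p) ≠ 0 := by
    rw [hmul]
    exact mul_ne_zero (orderCount_kernel_prime_ne_zero hq hqK)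
      (orderCount_kernel_prime_ne_zero hp hpK)
  have hdvd := hF.orderCount_kernel_dvd hG hqp1 hqpK h0
  rw [hmul] at hdvd
  have h2 : Nat.card H * Nat.card H ∣ Nat.card K * Nat.card H :=
    (mul_dvd_mul (hF.card_dvd_orderCount_kernel hq.one_lt.ne' hqK)
      (hF.card_dvd_orderCount_kernel hp.one_lt.ne' hpK)).trans hdvd
  have h3 : Nat.card H ∣ Nat.card K := (Nat.mul_dvd_mul_iff_right Nat.card_pos).1 h2
  exact hF.one_lt_card_complement.ne'
    (Nat.eq_one_of_dvd_coprimes hF.coprime_card h3 dvd_rfl)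

/-- If `G` has perfect order classes and the complement has even order, then the kernel is
homocyclic, of rank determined by the order of the complement. -/
theorem exists_homocyclic (hF : IsFrobeniusWith K H) (heven : Even (Nat.card H))
    (hG : PerfectOrderClasses G) :
    ∃ p k r : ℕ, p.Prime ∧ 0 < k ∧ Nonempty (K ≃* (Fin r → Multiplicative (ZMod (p ^ k)))) ∧
      p ^ r = Nat.card H + 1 := by
  have hcomm := hF.mul_comm_kernel heven
  have := hF.2.2.1
  obtain ⟨p, n, hp, hK⟩ := hF.exists_card_kernel_eq_prime_pow hcomm hG
  have hn : n ≠ 0 := by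
    rintro rfl
    exact hF.one_lt_card_kernel.ne' (by simpa using hK)
  have hpK : p ∣ Nat.card K := hK ▸ dvd_pow_self p hn
  obtain ⟨ι, _, d, hd, ⟨f⟩⟩ : ∃ (ι : Type) (_ : Fintype ι) (d : ι → ℕ), (∀ i, 1 < d i) ∧
      Nonempty (K ≃* ((i : ι) → Multiplicative (ZMod (d i)))) :=
    letI : CommGroup K := { (inferInstance : Group K) with mul_comm := hcomm }
    CommGroup.equiv_prod_multiplicative_zmod_of_finite K
  have hcard : Nat.card K = ∏ i, d i := by
    rw [Nat.card_congr f.toEquiv, Nat.card_pi]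
    exact Finset.prod_congr rfl fun i _ => Nat.card_zmod _
  have hde : ∀ i, ∃ e, d i = p ^ e := fun i => by
    obtain ⟨e, -, he⟩ := (Nat.dvd_prime_pow hp).1
      (show d i ∣ p ^ n from hK ▸ hcard ▸ Finset.dvd_prod_of_mem d (Finset.mem_univ i))
    exact ⟨e, he⟩
  choose e he using hde
  obtain rfl : d = fun i => p ^ e i := funext he
  have hepos : ∀ i, 0 < e i := fun i => by
    rw [Nat.pos_iff_ne_zero]
    intro hc
    simpa [hc] using hd i
  have hcount : orderCount K p + 1 = p ^ Fintype.card ι := by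
    have h := orderCount_prime_pow_succ (A := K) hp 0
    rw [ncard_pow_eq_one (fun i => (pow_ne_zero _ hp.ne_zero)) f (p ^ (0 + 1)),
      Finset.prod_congr rfl fun i _ => Nat.gcd_eq_right (pow_dvd_pow p (hepos i))] at h
    simpa using h
  have hdvd : orderCount K p ∣ Nat.card H := by
    refine Nat.Coprime.dvd_of_dvd_mul_left ?_
      (hF.orderCount_kernel_dvd hG hp.one_lt.ne' hpK (orderCount_kernel_prime_ne_zero hp hpK))
    rw [hK]
    refine Nat.Coprime.pow_right n ((Nat.Prime.coprime_iff_not_dvd hp).2 fun hc => ?_).symm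
    have hι : Fintype.card ι ≠ 0 := by
      intro h0
      exact orderCount_kernel_prime_ne_zero hp hpK (by simpa [h0] using hcount)
    have := (Nat.dvd_add_right hc).1 (hcount ▸ dvd_pow_self p hι)
    exact hp.one_lt.ne' (Nat.dvd_one.1 this)
  have hHcount : orderCount K p = Nat.card H :=
    Nat.dvd_antisymm hdvd (hF.card_dvd_orderCount_kernel hp.one_lt.ne' hpK)
  have hle := exponent_le_of_transitive hp hepos f
    (hF.transitive_of_orderCount_eq hp.one_lt.ne' hHcount)
  have hne : Nonempty ι := by
    by_contra hι
    rw [not_nonempty_iff] at hι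
    exact hF.one_lt_card_kernel.ne' (by simpa using hcard)
  obtain ⟨i₀⟩ := hne
  obtain ⟨k, hk⟩ : ∃ k, k = e i₀ := ⟨_, rfl⟩
  obtain rfl : e = fun _ => k := funext fun i => hk ▸ le_antisymm (hle i i₀) (hle i₀ i)
  refine ⟨p, k, Fintype.card ι, hp, hepos i₀, ⟨f.trans ?_⟩, by rw [← hcount, hHcount]⟩
  exact MulEquiv.arrowCongr (Fintype.equivFin ι) (MulEquiv.refl _)

end IsFrobeniusWith

theorem IsoFrobSdp.perfectOrderClasses {G : Type*} [Group G] {p k m a b : ℕ} (hp : p.Prime)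
    (hk : 0 < k) (ha : 0 < a) (hm : m = 2 ^ a * 3 ^ b) (hpm : p ^ 2 = m + 1)
    (h : IsoFrobSdp G (Fin 2 → Multiplicative (ZMod (p ^ k))) (Multiplicative (ZMod m))) :
    PerfectOrderClasses G := by
  obtain ⟨φ, hφ, ⟨e⟩⟩ := h
  have : NeZero (p ^ k) := ⟨pow_ne_zero _ hp.ne_zero⟩
  have : Fact (1 < p ^ k) := ⟨Nat.one_lt_pow hk.ne' hp.one_lt⟩
  have hm1 : 1 < m := by
    have := hp.two_le
    nlinarith
  have : NeZero m := ⟨by omega⟩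
  have : Fact (1 < m) := ⟨hm1⟩
  have : Finite (SemidirectProduct (Fin 2 → Multiplicative (ZMod (p ^ k)))
      (Multiplicative (ZMod m)) φ) := Finite.of_equiv _ SemidirectProduct.equivProd.symm
  have eH := MonoidHom.ofInjective (SemidirectProduct.inr_injective (φ := φ))
  have hcard : Nat.card (SemidirectProduct.inr (φ := φ)).range = m := by
    rw [← Nat.card_congr eH.toEquiv]
    exact Nat.card_zmod m
  refine PerfectOrderClasses.of_mulEquiv e
    ((IsFrobeniusWith.of_semidirectProduct φ hφ).perfectOrderClasses_of_homocyclic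
      (eH.isCyclic.1 inferInstance) hp ha
      (MonoidHom.ofInjective SemidirectProduct.inl_injective).symm (hcard.trans hm) ?_)
  rw [hcard, Fintype.card_fin, hpm]

/-- Frobenius groups with cyclic complement and perfect order classes. -/
theorem frobenius_cyclic_complement_perfectOrderClasses_iff
    {G : Type*} [Group G] [Fintype G] (K H : Subgroup G)
    (hFrob : IsFrobeniusWith K H) (hcyc : IsCyclic H) :
    PerfectOrderClasses G ↔
      (∃ p k : ℕ, p.Prime ∧ Odd p ∧ 0 < k ∧
          Nonempty (K ≃* Multiplicative (ZMod (p ^ k))) ∧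
          p = 1 + Nat.card H ∧
          Even (Nat.card H) ∧ 0 < Nat.card H ∧
          ∃ a b : ℕ, Nat.card H = 2 ^ a * 3 ^ b) ∨
      (∃ k : ℕ, 0 < k ∧
        (IsoFrobSdp G (Fin 2 → Multiplicative (ZMod (3 ^ k))) (Multiplicative (ZMod 8)) ∨
          IsoFrobSdp G (Fin 2 → Multiplicative (ZMod (5 ^ k))) (Multiplicative (ZMod 24)) ∨
          IsoFrobSdp G (Fin 2 → Multiplicative (ZMod (7 ^ k))) (Multiplicative (ZMod 48)) ∨
          IsoFrobSdp G (Fin 2 → Multiplicative (ZMod (17 ^ k)))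
            (Multiplicative (ZMod 288)))) := by
  constructor
  · intro hG
    obtain ⟨a, b, ha, hH⟩ := exists_eq_two_pow_mul_three_pow_of_totient_dvd
      hFrob.one_lt_card_complement (hFrob.totient_card_complement_dvd hcyc hG)
    have heven : Even (Nat.card H) := by
      rw [hH, even_iff_two_dvd]
      exact Dvd.dvd.mul_right (dvd_pow_self 2 ha.ne') _
    obtain ⟨p, k, r, hp, hk, ⟨f⟩, hpr⟩ := hFrob.exists_homocyclic heven hG
    have eH : H ≃* Multiplicative (ZMod (Nat.card H)) := (zmodCyclicMulEquiv hcyc).symm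
    rcases prime_pow_eq_two_pow_mul_three_pow_add_one hp ha (hH ▸ hpr) with rfl | ⟨rfl, hp4⟩
    · rw [pow_one] at hpr
      exact Or.inl ⟨p, k, hp, hpr ▸ heven.add_one, hk, ⟨f.trans (MulEquiv.funUnique (Fin 1) _)⟩,
        by rw [hpr, add_comm], heven, Nat.card_pos, a, b, hH⟩
    · refine Or.inr ⟨k, hk, ?_⟩
      rcases hp4 with rfl | rfl | rfl | rfl
      · rw [show Nat.card H = 8 by omega] at eH
        exact Or.inl (hFrob.isoFrobSdp f eH)
      · rw [show Nat.card H = 24 by omega] at eH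
        exact Or.inr (Or.inl (hFrob.isoFrobSdp f eH))
      · rw [show Nat.card H = 48 by omega] at eH
        exact Or.inr (Or.inr (Or.inl (hFrob.isoFrobSdp f eH)))
      · rw [show Nat.card H = 288 by omega] at eH
        exact Or.inr (Or.inr (Or.inr (hFrob.isoFrobSdp f eH)))
  · rintro (⟨p, k, hp, -, -, ⟨f⟩, hpH, heven, -, a, b, hH⟩ | ⟨k, hk, h | h | h | h⟩)
    · have ha : 0 < a := by
        rw [Nat.pos_iff_ne_zero]
        rintro rfl
        rw [hH, pow_zero, one_mul] at heven
        exact Nat.not_even_iff_odd.2 (Odd.pow (by decide)) heven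
      exact hFrob.perfectOrderClasses_of_homocyclic hcyc hp ha
        (f.trans (MulEquiv.funUnique (Fin 1) _).symm) hH (by simp [hpH, add_comm])
    · exact h.perfectOrderClasses (a := 3) (b := 0) (by norm_num) hk (by norm_num) rfl rfl
    · exact h.perfectOrderClasses (a := 3) (b := 1) (by norm_num) hk (by norm_num) rfl rfl
    · exact h.perfectOrderClasses (a := 4) (b := 1) (by norm_num) hk (by norm_num) rfl rfl
    · exact h.perfectOrderClasses (a := 5) (b := 2) (by norm_num) hk (by norm_num) rfl rfl
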